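/- Let G be a graph with n vertices and let k be an integer with 0 ≤ k ≤ n. Then T(G) can be transformed by a sequence of subtree raising operations pruning exactly k inner nodes in total into a decision tree with zero errors on E(G) if and only if G has an independent set of size k; the same equivalence holds with 'pruning at least k inner nodes' in place of 'pruning exactly k inner nodes'. Moreover, for every S ⊆ V(G), the tree obtained from T(G) by applying, at each cut 'v ≤ 0' with v ∈ S, the raising operation keeping the child that continues the path has zero errors on E(G) if and only if S is an independent set of G. -/

import Mathlib

/-- The two class labels. -/
inductive Label where
  | blue
  | red
deriving DecidableEq

/-- A decision tree over examples `ι → ℝ` with classes `{blue, red}`: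
every inner node carries a feature and a threshold, every leaf a class label.
An example goes to the left child if its value in the node's feature is at most
the threshold, and to the right child otherwise. -/
inductive DTree (ι : Type) where
  | leaf (c : Label)
  | node (feat : ι) (thr : ℝ) (left right : DTree ι)

namespace DTree

variable {ι : Type}

/-- The class that a decision tree assigns to an example. -/
noncomputable def classify : DTree ι → (ι → ℝ) → Label
  | .leaf c, _ => c
  | .node f t l r, e => if e f ≤ t then l.classify e else r.classify e

/-- The routing path of an example (`false` = left child, `true` = right child);
it is the position of the leaf of the example. -/
noncomputable def route : DTree ι → (ι → ℝ) → List Bool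
  | .leaf _, _ => []
  | .node f t l r, e => if e f ≤ t then false :: l.route e else true :: r.route e

/-- The subtree rooted at a position (`none` if the position is not a node). -/
def subtreeAt : DTree ι → List Bool → Option (DTree ι)
  | T, [] => some T
  | .leaf _, _ :: _ => none
  | .node _ _ l r, b :: p => (if b then r else l).subtreeAt p

/-- Replace the subtree at a given position by another tree. -/
def replaceAt : DTree ι → List Bool → DTree ι → DTree ι
  | _, [], T' => T'
  | .leaf c, _ :: _, _ => .leaf c
  | .node f t l r, b :: p, T' =>
      if b then .node f t l (r.replaceAt p T') else .node f t (l.replaceAt p T') r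

/-- The number of inner nodes of a decision tree. -/
def innerCount : DTree ι → ℕ
  | .leaf _ => 0
  | .node _ _ l r => 1 + l.innerCount + r.innerCount

/-- The position `p` is an inner node of `T`. -/
def IsInnerPos (T : DTree ι) (p : List Bool) : Prop :=
  ∃ f t l r, T.subtreeAt p = some (.node f t l r)

/-- The position `p` is a node of `T`. -/
def IsNodePos (T : DTree ι) (p : List Bool) : Prop :=
  (T.subtreeAt p).isSome

/-- The feature and threshold of the inner node at position `p`. -/
def cutAt (T : DTree ι) (p : List Bool) : Option (ι × ℝ) :=
  match T.subtreeAt p with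
  | some (.node f t _ _) => some (f, t)
  | _ => none

/-- The subtree raising operation at position `q` keeping the child in direction `b`:
the subtree rooted at `q` is replaced by the subtree rooted at its `b`-child; it prunes
the node at `q` together with all inner nodes of the subtree rooted at the other child. -/
def raiseAt (T : DTree ι) (q : List Bool) (b : Bool) : DTree ι :=
  match T.subtreeAt q with
  | some (.node _ _ l r) => T.replaceAt q (if b then r else l)
  | _ => T

end DTree

/-- `E[T,p]`: the examples of `E` whose routing through `T` passes the position `p`. -/
noncomputable def reach {ι : Type} (E : Finset (ι → ℝ)) (T : DTree ι) (p : List Bool) :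
    Finset (ι → ℝ) :=
  E.filter fun e => p <+: T.route e

/-- The number of errors of `T` on the training set `(E, lab)`. -/
noncomputable def errCount {ι : Type} (T : DTree ι) (E : Finset (ι → ℝ))
    (lab : (ι → ℝ) → Label) : ℕ :=
  (E.filter fun e => T.classify e ≠ lab e).card

/-- A most frequent label of the labeled set `(E, lab)` (blue in case of a tie). -/
def majorityLabel {ι : Type} (E : Finset (ι → ℝ)) (lab : (ι → ℝ) → Label) : Label :=
  if (E.filter fun e => lab e = Label.red).card ≤ (E.filter fun e => lab e = Label.blue).card
  then Label.blue else Label.red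

/-- One subtree replacement operation: some inner node of `T` is replaced by a leaf
labeled with a most frequent label of the examples reaching it. -/
def ReplStep {ι : Type} (E : Finset (ι → ℝ)) (lab : (ι → ℝ) → Label)
    (T T' : DTree ι) : Prop :=
  ∃ p, T.IsInnerPos p ∧
    T' = T.replaceAt p (.leaf (majorityLabel (reach E T p) lab))

/-- `T` is a reasonable decision tree for `(E, lab)`: every node is reached by some
example and every leaf carries a most frequent label of the examples reaching it. -/
def Reasonable {ι : Type} (E : Finset (ι → ℝ)) (lab : (ι → ℝ) → Label)
    (T : DTree ι) : Prop :=
  (∀ p, T.IsNodePos p → (reach E T p).Nonempty) ∧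
  (∀ p c, T.subtreeAt p = some (.leaf c) → ∀ c' : Label,
    ((reach E T p).filter fun e => lab e = c').card ≤
      ((reach E T p).filter fun e => lab e = c).card)

/-- Apply a sequence of raising operations (given by positions and kept directions). -/
def applySeq {ι : Type} : DTree ι → List (List Bool × Bool) → DTree ι
  | T, [] => T
  | T, (q, b) :: rest => applySeq (T.raiseAt q b) rest

/-- Each raising operation of the sequence is applied at an inner node. -/
def ValidSeq {ι : Type} : DTree ι → List (List Bool × Bool) → Prop
  | _, [] => True
  | T, (q, b) :: rest => T.IsInnerPos q ∧ ValidSeq (T.raiseAt q b) rest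

/-- The total number of inner nodes pruned by a sequence of raising operations. -/
def seqPruned {ι : Type} : DTree ι → List (List Bool × Bool) → ℕ
  | _, [] => 0
  | T, (q, b) :: rest =>
      (match T.subtreeAt q with
        | some (.node _ _ l r) => 1 + DTree.innerCount (if b then l else r)
        | _ => 0) + seqPruned (T.raiseAt q b) rest

/-- `T'` is obtained from `T` by a (possibly empty) sequence of subtree raising
operations. -/
def RaisedFrom {ι : Type} (T T' : DTree ι) : Prop :=
  ∃ steps, ValidSeq T steps ∧ applySeq T steps = T'

/-- `T'` is obtained from `T` by a sequence of subtree raising operations pruning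
exactly `m` inner nodes in total. -/
def RaisedFromPruning {ι : Type} (T : DTree ι) (m : ℕ) (T' : DTree ι) : Prop :=
  ∃ steps, ValidSeq T steps ∧ seqPruned T steps = m ∧ applySeq T steps = T'

/-- Tracking the position of a node through one raising operation: nodes strictly
below the raised node on the discarded side, and the raised node itself, are pruned
(`none`); all other nodes survive at a possibly shifted position. -/
def stepMap (q : List Bool) (b : Bool) (p : List Bool) : Option (List Bool) :=
  if q <+: p then
    if q ++ [b] <+: p then some (q ++ p.drop (q.length + 1)) else none
  else some p

/-- Tracking the position of a node through a sequence of raising operations. -/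
def seqMap : List (List Bool × Bool) → List Bool → Option (List Bool)
  | [], p => some p
  | (q, b) :: rest, p => (stepMap q b p).bind (seqMap rest)

/-- The number of errors of `T` on a multiset of labeled examples. -/
noncomputable def errCountM {ι : Type} (T : DTree ι) (E : Multiset ((ι → ℝ) × Label)) : ℕ :=
  (E.filter fun q => T.classify q.1 ≠ q.2).card

/-- The 0/1 indicator vector of a set of coordinates. -/
def indVec {m : ℕ} (S : Finset (Fin m)) : Fin m → ℝ := fun i => if i ∈ S then 1 else 0

/-- The blue edge example of an edge `{v, w}`: value `1` exactly in the
coordinates `v` and `w`. -/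
def edgeEx (n : ℕ) : Sym2 (Fin n) → (Fin (n + 1) → ℝ) :=
  Sym2.lift ⟨fun v w => indVec {v.castSucc, w.castSucc},
    fun v w => by simp only []; rw [Finset.pair_comm]⟩

/-- The blue vertex example of a vertex `v`: value `1` exactly in the coordinates
`v` and `d*` (the last coordinate). -/
def vertEx (n : ℕ) (v : Fin n) : Fin (n + 1) → ℝ := indVec {v.castSucc, Fin.last n}

/-- The blue example with value `1` only in the coordinate `d*`. -/
def starEx (n : ℕ) : Fin (n + 1) → ℝ := indVec {Fin.last n}

/-- The labeling: the all-zero example is red, all other examples are blue. -/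
noncomputable def labG (n : ℕ) : (Fin (n + 1) → ℝ) → Label :=
  fun e => if e = (fun _ => 0) then Label.red else Label.blue

/-- The training set `E(G)` of the independent-set construction. -/
noncomputable def EG {n : ℕ} (G : SimpleGraph (Fin n)) [DecidableRel G.Adj] :
    Finset (Fin (n + 1) → ℝ) :=
  (G.edgeFinset.image (edgeEx n)) ∪ (Finset.univ.image (vertEx n)) ∪
    {starEx n, fun _ => 0}

/-- A descending path of cuts `f ≤ 0` (for `f` in the given list) whose right
children are blue leaves and whose left children continue the path, ending in the
given tree. -/
def chainB {m : ℕ} (fs : List (Fin m)) (tail : DTree (Fin m)) : DTree (Fin m) :=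
  fs.foldr (fun f acc => DTree.node f 0 acc (.leaf .blue)) tail

/-- The decision tree `T(G)`: the path of cuts `v₁ ≤ 0, …, vₙ ≤ 0, d* ≤ 0`; at each
vertex cut the right child is a blue leaf; the final cut has a red left child and a
blue right child. -/
def TG (n : ℕ) : DTree (Fin (n + 1)) :=
  chainB (List.ofFn fun i : Fin n => i.castSucc)
    (DTree.node (Fin.last n) 0 (.leaf .red) (.leaf .blue))

/-- The tree obtained from `T(G)` by applying, at each cut `v ≤ 0` with `v ∈ R`,
the raising operation keeping the child that continues the path: the path of the
cuts `v ≤ 0` for `v ∉ R` followed by the cut `d* ≤ 0`. -/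
def TGkeep (n : ℕ) (R : Finset (Fin n)) : DTree (Fin (n + 1)) :=
  chainB (((List.ofFn fun i : Fin n => i).filter fun v => decide (v ∉ R)).map Fin.castSucc)
    (DTree.node (Fin.last n) 0 (.leaf .red) (.leaf .blue))

namespace DTree

variable {ι : Type}

lemma not_isInnerPos_leaf {c : Label} {q : List Bool} : ¬ (leaf c : DTree ι).IsInnerPos q := by
  rintro ⟨f, t, l, r, h⟩
  cases q <;> simp [subtreeAt] at h

lemma isInnerPos_nil (f : ι) (t : ℝ) (l r : DTree ι) : (node f t l r).IsInnerPos [] :=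
  ⟨f, t, l, r, rfl⟩

lemma isInnerPos_node_cons (f : ι) (t : ℝ) (l r : DTree ι) (d : Bool) (p : List Bool) :
    (node f t l r).IsInnerPos (d :: p) ↔ (if d then r else l).IsInnerPos p :=
  Iff.rfl

lemma raiseAt_nil (f : ι) (t : ℝ) (l r : DTree ι) (b : Bool) :
    (node f t l r).raiseAt [] b = if b then r else l := by
  simp [raiseAt, subtreeAt, replaceAt]

lemma raiseAt_false_cons (f : ι) (t : ℝ) (l r : DTree ι) (p : List Bool) (b : Bool) :
    (node f t l r).raiseAt (false :: p) b = node f t (l.raiseAt p b) r := by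
  unfold raiseAt
  rcases h : l.subtreeAt p with _ | (_ | _) <;> simp [subtreeAt, replaceAt, h]

lemma innerCount_replaceAt {T U : DTree ι} {q : List Bool} (h : T.subtreeAt q = some U)
    (V : DTree ι) : (T.replaceAt q V).innerCount + U.innerCount =
      T.innerCount + V.innerCount := by
  induction q generalizing T with
  | nil =>
    cases T <;> simp only [subtreeAt, Option.some.injEq] at h <;> subst h <;>
      simp only [replaceAt] <;> omega
  | cons d p ih =>
    cases T with
    | leaf c => simp [subtreeAt] at h
    | node f t l r =>
      cases d <;> simp only [subtreeAt, Bool.false_eq_true, if_false, if_true] at h <;>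
        have := ih h <;> simp [replaceAt, innerCount] <;> omega

end DTree

open DTree

section RaisingSequences

variable {ι : Type}

lemma innerCount_applySeq_add_seqPruned {T : DTree ι} {steps : List (List Bool × Bool)}
    (h : ValidSeq T steps) :
    (applySeq T steps).innerCount + seqPruned T steps = T.innerCount := by
  induction steps generalizing T with
  | nil => simp [applySeq, seqPruned]
  | cons s rest ih =>
    obtain ⟨q, b⟩ := s
    obtain ⟨⟨f, t, l, r, hq⟩, hrest⟩ := h
    have hih := ih hrest
    have hrep := innerCount_replaceAt hq (if b then r else l)
    have hraise : T.raiseAt q b = T.replaceAt q (if b then r else l) := by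
      simp [raiseAt, hq]
    rw [← hraise] at hrep
    have hpruned : seqPruned T ((q, b) :: rest) =
        1 + (if b then l else r).innerCount + seqPruned (T.raiseAt q b) rest := by
      simp [seqPruned, hq]
    rw [applySeq, hpruned]
    cases b <;> simp only [innerCount, Bool.false_eq_true, if_false, if_true] at hrep ⊢ <;> omega

lemma RaisedFrom.pruning {T T' : DTree ι} {m : ℕ} (h : RaisedFrom T T')
    (hm : T'.innerCount + m = T.innerCount) : RaisedFromPruning T m T' := by
  obtain ⟨steps, hv, rfl⟩ := h
  have := innerCount_applySeq_add_seqPruned hv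
  exact ⟨steps, hv, by omega, rfl⟩

lemma RaisedFrom.raise_root_left {f : ι} {t : ℝ} {l r T' : DTree ι} (h : RaisedFrom l T') :
    RaisedFrom (node f t l r) T' := by
  obtain ⟨steps, hv, ha⟩ := h
  refine ⟨([], false) :: steps, ⟨isInnerPos_nil f t l r, ?_⟩, ?_⟩
  · simpa [raiseAt_nil] using hv
  · simpa [applySeq, raiseAt_nil] using ha

lemma RaisedFrom.node_left {f : ι} {t : ℝ} {l r l' : DTree ι} (h : RaisedFrom l l') :
    RaisedFrom (node f t l r) (node f t l' r) := by
  obtain ⟨steps, hv, rfl⟩ := h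
  induction steps generalizing l with
  | nil => exact ⟨[], trivial, rfl⟩
  | cons s rest ih =>
    obtain ⟨q, b⟩ := s
    obtain ⟨steps, hv', ha⟩ := ih hv.2
    refine ⟨(false :: q, b) :: steps, ⟨?_, ?_⟩, ?_⟩
    · simpa [isInnerPos_node_cons] using hv.1
    · simpa [raiseAt_false_cons] using hv'
    · simpa [applySeq, raiseAt_false_cons] using ha

end RaisingSequences

section Chains

variable {m : ℕ}

lemma chainB_cons (f : Fin m) (fs : List (Fin m)) (tail : DTree (Fin m)) :
    chainB (f :: fs) tail = node f 0 (chainB fs tail) (.leaf .blue) :=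
  rfl

lemma raisedFrom_chainB_of_sublist {fs' fs : List (Fin m)} (h : fs'.Sublist fs)
    (tail : DTree (Fin m)) : RaisedFrom (chainB fs tail) (chainB fs' tail) := by
  induction h with
  | slnil => exact ⟨[], trivial, rfl⟩
  | cons f _ ih => exact ih.raise_root_left
  | cons_cons f _ ih => exact ih.node_left

lemma innerCount_chainB (fs : List (Fin m)) (tail : DTree (Fin m)) :
    (chainB fs tail).innerCount = fs.length + tail.innerCount := by
  induction fs with
  | nil => simp [chainB]
  | cons f fs ih => simp [chainB_cons, innerCount, ih]; omega

lemma classify_chainB_of_le {fs : List (Fin m)} {e : Fin m → ℝ} (h : ∀ f ∈ fs, e f ≤ 0)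
    (tail : DTree (Fin m)) : (chainB fs tail).classify e = tail.classify e := by
  induction fs with
  | nil => rfl
  | cons f fs ih =>
    simp only [List.mem_cons, forall_eq_or_imp] at h
    simp [chainB_cons, classify, h.1, ih h.2]

lemma classify_chainB_of_pos {fs : List (Fin m)} {e : Fin m → ℝ} {f : Fin m} (hf : f ∈ fs)
    (he : 0 < e f) (tail : DTree (Fin m)) : (chainB fs tail).classify e = .blue := by
  induction fs with
  | nil => simp at hf
  | cons g fs ih =>
    rw [chainB_cons, classify]
    split_ifs with hg
    · rcases List.mem_cons.1 hf with rfl | hf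
      · exact absurd hg (not_le.2 he)
      · exact ih hf
    · rfl

/-- Raising operations turn a chain into a chain of a sublist of its cuts, whose tail is either
the original final cut or a leaf. -/
lemma exists_chainB_raiseAt {d : Fin m} {t : ℝ} {c₁ c₂ : Label} {fs : List (Fin m)}
    {tail : DTree (Fin m)}
    (htail : tail = node d t (.leaf c₁) (.leaf c₂) ∨ ∃ c, tail = .leaf c)
    {q : List Bool} (b : Bool) (hq : (chainB fs tail).IsInnerPos q) :
    ∃ fs' tail', fs'.Sublist fs ∧
      (tail' = node d t (.leaf c₁) (.leaf c₂) ∨ ∃ c, tail' = .leaf c) ∧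
      (chainB fs tail).raiseAt q b = chainB fs' tail' := by
  induction fs generalizing q with
  | nil =>
    rcases htail with rfl | ⟨c, rfl⟩
    · change (node d t (.leaf c₁) (.leaf c₂)).IsInnerPos q at hq
      match q, hq with
      | [], _ => exact ⟨[], .leaf (if b then c₂ else c₁), .refl _, .inr ⟨_, rfl⟩, by
          cases b <;> rfl⟩
      | x :: p, hq => cases x <;> exact absurd hq not_isInnerPos_leaf
    · exact absurd hq not_isInnerPos_leaf
  | cons f fs ih =>
    match q, b, hq with
    | [], false, _ => exact ⟨fs, tail, List.sublist_cons_self f fs, htail, raiseAt_nil ..⟩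
    | [], true, _ => exact ⟨[], .leaf .blue, List.nil_sublist _, .inr ⟨_, rfl⟩, raiseAt_nil ..⟩
    | true :: p, _, hq => exact absurd hq not_isInnerPos_leaf
    | false :: p, b, hq =>
      obtain ⟨fs', tail', hs, ht, he⟩ := ih (q := p) hq
      exact ⟨f :: fs', tail', hs.cons_cons f, ht, by
        rw [chainB_cons, raiseAt_false_cons, he, chainB_cons]⟩

lemma RaisedFrom.exists_chainB {d : Fin m} {t : ℝ} {c₁ c₂ : Label} {fs : List (Fin m)}
    {tail T' : DTree (Fin m)}
    (htail : tail = node d t (.leaf c₁) (.leaf c₂) ∨ ∃ c, tail = .leaf c)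
    (h : RaisedFrom (chainB fs tail) T') :
    ∃ fs' tail', fs'.Sublist fs ∧
      (tail' = node d t (.leaf c₁) (.leaf c₂) ∨ ∃ c, tail' = .leaf c) ∧
      T' = chainB fs' tail' := by
  obtain ⟨steps, hv, rfl⟩ := h
  induction steps generalizing fs tail with
  | nil => exact ⟨fs, tail, .refl _, htail, rfl⟩
  | cons s rest ih =>
    obtain ⟨q, b⟩ := s
    obtain ⟨hq, hrest⟩ := hv
    obtain ⟨fs₁, tail₁, hs₁, ht₁, he₁⟩ := exists_chainB_raiseAt htail b hq
    rw [he₁] at hrest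
    obtain ⟨fs', tail', hs, ht, he⟩ := ih ht₁ hrest
    exact ⟨fs', tail', hs.trans hs₁, ht, by rw [applySeq, he₁, he]⟩

end Chains

section Errors

variable {n : ℕ}

lemma errCount_eq_zero_iff {ι : Type} {T : DTree ι} {E : Finset (ι → ℝ)}
    {lab : (ι → ℝ) → Label} : errCount T E lab = 0 ↔ ∀ e ∈ E, T.classify e = lab e := by
  simp [errCount, Finset.filter_eq_empty_iff]

lemma indVec_ne_zero {m : ℕ} {S : Finset (Fin m)} {i : Fin m} (hi : i ∈ S) :
    indVec S ≠ fun _ => 0 := by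
  intro h
  simpa [indVec, hi] using congrFun h i

lemma labG_indVec {S : Finset (Fin (n + 1))} {i : Fin (n + 1)} (hi : i ∈ S) :
    labG n (indVec S) = .blue :=
  if_neg (indVec_ne_zero hi)

lemma labG_zero : labG n (fun _ => 0) = .red :=
  if_pos rfl

lemma indVec_pos {m : ℕ} {S : Finset (Fin m)} {i : Fin m} (hi : i ∈ S) : 0 < indVec S i := by
  simp [indVec, hi]

lemma indVec_le_zero {m : ℕ} {S : Finset (Fin m)} {i : Fin m} (hi : i ∉ S) :
    indVec S i ≤ 0 := by
  simp [indVec, hi]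

lemma errCount_chainB_leaf_ne_zero (G : SimpleGraph (Fin n)) [DecidableRel G.Adj]
    {fs : List (Fin (n + 1))} (hfs : Fin.last n ∉ fs) (c : Label) :
    errCount (chainB fs (.leaf c)) (EG G) (labG n) ≠ 0 := by
  rw [Ne, errCount_eq_zero_iff]
  intro h
  have hzero := h (fun _ => 0) (by simp [EG])
  have hstar := h (starEx n) (by simp [EG])
  rw [classify_chainB_of_le (fun _ _ => le_rfl), labG_zero] at hzero
  rw [starEx, labG_indVec (Finset.mem_singleton_self _), classify_chainB_of_le] at hstar
  · simp only [classify] at hzero hstar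
    simp [hzero] at hstar
  · intro f hf
    exact indVec_le_zero (fun hmem => by simp_all)

lemma errCount_chainB_eq_zero_iff (G : SimpleGraph (Fin n)) [DecidableRel G.Adj]
    (fs : List (Fin (n + 1))) :
    errCount (chainB fs (node (Fin.last n) 0 (.leaf .red) (.leaf .blue))) (EG G) (labG n) = 0 ↔
      ∀ v w, v.castSucc ∉ fs → w.castSucc ∉ fs → ¬ G.Adj v w := by
  have hlast : ∀ S : Finset (Fin (n + 1)), Fin.last n ∈ S →
      (chainB fs (node (Fin.last n) 0 (.leaf .red) (.leaf .blue))).classify (indVec S) =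
        labG n (indVec S) := by
    intro S hS
    rw [labG_indVec hS]
    by_cases h : ∀ f ∈ fs, indVec S f ≤ 0
    · rw [classify_chainB_of_le h, classify, if_neg (not_le.2 (indVec_pos hS)), classify]
    · push Not at h
      obtain ⟨f, hf, hpos⟩ := h
      exact classify_chainB_of_pos hf hpos _
  rw [errCount_eq_zero_iff]
  constructor
  · intro h v w hv hw hadj
    have hedge := h (edgeEx n s(v, w)) (by
      simp only [EG, Finset.mem_union, Finset.mem_image]
      exact .inl (.inl ⟨s(v, w), by simpa using hadj, rfl⟩))
    change classify _ (indVec {v.castSucc, w.castSucc}) =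
      labG n (indVec {v.castSucc, w.castSucc}) at hedge
    rw [labG_indVec (Finset.mem_insert_self _ _), classify_chainB_of_le, classify, if_pos,
      classify] at hedge
    · exact absurd hedge (by simp)
    · exact indVec_le_zero (by simp [Fin.ext_iff]; omega)
    · intro f hf
      refine indVec_le_zero ?_
      simp only [Finset.mem_insert, Finset.mem_singleton]
      rintro (rfl | rfl)
      · exact hv hf
      · exact hw hf
  · intro h e he
    simp only [EG, Finset.mem_union, Finset.mem_image, Finset.mem_insert,
      Finset.mem_singleton] at he
    rcases he with (⟨s, hs, rfl⟩ | ⟨v, -, rfl⟩) | rfl | rfl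
    · induction s with
      | h v w =>
        change classify _ (indVec {v.castSucc, w.castSucc}) =
          labG n (indVec {v.castSucc, w.castSucc})
        rw [labG_indVec (Finset.mem_insert_self _ _)]
        by_cases hv : v.castSucc ∈ fs
        · exact classify_chainB_of_pos hv (indVec_pos (by simp)) _
        by_cases hw : w.castSucc ∈ fs
        · exact classify_chainB_of_pos hw (indVec_pos (by simp)) _
        exact absurd (by simpa using hs) (h v w hv hw)
    · exact hlast _ (by simp)
    · exact hlast _ (by simp)
    · rw [classify_chainB_of_le (fun _ _ => le_rfl), labG_zero]
      simp [classify]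

end Errors

section Reduction

variable {n : ℕ}

lemma ofFn_castSucc (n : ℕ) :
    (List.ofFn fun i : Fin n => i.castSucc) =
      (List.ofFn fun i : Fin n => i).map Fin.castSucc := by
  rw [List.map_ofFn]; rfl

lemma last_notMem_ofFn_castSucc (n : ℕ) :
    Fin.last n ∉ List.ofFn fun i : Fin n => i.castSucc := by
  simp [List.mem_ofFn, Fin.castSucc_ne_last]

lemma nodup_ofFn_castSucc (n : ℕ) : (List.ofFn fun i : Fin n => i.castSucc).Nodup :=
  List.nodup_ofFn.2 (Fin.castSucc_injective n)

/-- The number of vertices whose cut is missing from a sublist of the vertex cuts. -/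
lemma card_notMem_add_length {fs : List (Fin (n + 1))}
    (h : fs.Sublist (List.ofFn fun i : Fin n => i.castSucc)) :
    (Finset.univ.filter fun v : Fin n => v.castSucc ∉ fs).card + fs.length = n := by
  have himage : ((Finset.univ.filter fun v : Fin n => v.castSucc ∈ fs).map
      Fin.castSuccEmb) = fs.toFinset := by
    ext x
    simp only [Finset.mem_map, Finset.mem_filter, Finset.mem_univ, true_and, List.mem_toFinset]
    constructor
    · rintro ⟨v, hv, rfl⟩
      exact hv
    · intro hx
      obtain ⟨v, rfl⟩ := List.mem_ofFn.1 (h.subset hx)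
      exact ⟨v, hx, rfl⟩
  have hlen := congrArg Finset.card himage
  rw [Finset.card_map, List.toFinset_card_of_nodup ((nodup_ofFn_castSucc n).sublist h)] at hlen
  have := Finset.card_filter_add_card_filter_not (s := (Finset.univ : Finset (Fin n)))
    (fun v => v.castSucc ∈ fs)
  rw [Finset.card_univ, Fintype.card_fin] at this
  omega

lemma exists_independent_of_raisedFromPruning (G : SimpleGraph (Fin n)) [DecidableRel G.Adj]
    {m : ℕ} {T' : DTree (Fin (n + 1))} (h : RaisedFromPruning (TG n) m T')
    (herr : errCount T' (EG G) (labG n) = 0) :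
    ∃ S : Finset (Fin n), S.card = m ∧ ∀ v ∈ S, ∀ w ∈ S, ¬ G.Adj v w := by
  obtain ⟨steps, hv, hm, ha⟩ := h
  have hcount := innerCount_applySeq_add_seqPruned hv
  obtain ⟨fs, tail, hs, rfl | ⟨c, rfl⟩, rfl⟩ :=
    RaisedFrom.exists_chainB (.inl rfl) ⟨steps, hv, ha⟩
  · refine ⟨Finset.univ.filter fun v => v.castSucc ∉ fs, ?_, ?_⟩
    · have := card_notMem_add_length hs
      rw [ha, hm, TG, innerCount_chainB, innerCount_chainB, List.length_ofFn] at hcount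
      omega
    · intro v hv w hw
      exact (errCount_chainB_eq_zero_iff G fs).1 herr v w (by simpa using hv) (by simpa using hw)
  · exact absurd herr (errCount_chainB_leaf_ne_zero G
      (fun hmem => last_notMem_ofFn_castSucc n (hs.subset hmem)) c)

lemma castSucc_notMem_keep_iff (S : Finset (Fin n)) (v : Fin n) :
    v.castSucc ∉ ((List.ofFn fun i : Fin n => i).filter fun v => decide (v ∉ S)).map
      Fin.castSucc ↔ v ∈ S := by
  simp [List.mem_ofFn]

lemma errCount_TGkeep_eq_zero_iff (G : SimpleGraph (Fin n)) [DecidableRel G.Adj]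
    (S : Finset (Fin n)) :
    errCount (TGkeep n S) (EG G) (labG n) = 0 ↔ ∀ v ∈ S, ∀ w ∈ S, ¬ G.Adj v w := by
  rw [TGkeep, errCount_chainB_eq_zero_iff]
  simp only [castSucc_notMem_keep_iff]
  exact ⟨fun h v hv w hw => h v w hv hw, fun h v w hv hw => h v hv w hw⟩

lemma raisedFromPruning_TGkeep (S : Finset (Fin n)) :
    RaisedFromPruning (TG n) S.card (TGkeep n S) := by
  have hs : (((List.ofFn fun i : Fin n => i).filter fun v => decide (v ∉ S)).map
      Fin.castSucc).Sublist (List.ofFn fun i : Fin n => i.castSucc) := by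
    rw [ofFn_castSucc]
    exact List.filter_sublist.map _
  refine (raisedFrom_chainB_of_sublist hs _).pruning ?_
  have hcard := card_notMem_add_length hs
  simp only [castSucc_notMem_keep_iff, Finset.filter_univ_mem] at hcard
  rw [innerCount_chainB, innerCount_chainB, List.length_ofFn]
  omega

end Reduction

/-- For a graph `G` on `n` vertices and `0 ≤ k ≤ n`: the tree
`T(G)` can be transformed by raising operations pruning exactly `k` inner nodes
into a tree with zero errors on `E(G)` iff `G` has an independent set of size `k`;
the same holds with "at least `k`" in place of "exactly `k`". Moreover, for every
`S ⊆ V(G)`, the tree obtained by raising away exactly the cuts of the vertices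
of `S` (keeping the continuing child each time) has zero errors on `E(G)` iff `S`
is an independent set. -/
theorem stmt8 {n : ℕ} (G : SimpleGraph (Fin n)) [DecidableRel G.Adj]
    (k : ℕ) (hk : k ≤ n) :
    ((∃ T', RaisedFromPruning (TG n) k T' ∧ errCount T' (EG G) (labG n) = 0)
      ↔ ∃ S : Finset (Fin n), S.card = k ∧ ∀ v ∈ S, ∀ w ∈ S, ¬ G.Adj v w)
    ∧ ((∃ T' m, k ≤ m ∧ RaisedFromPruning (TG n) m T' ∧
          errCount T' (EG G) (labG n) = 0)
      ↔ ∃ S : Finset (Fin n), S.card = k ∧ ∀ v ∈ S, ∀ w ∈ S, ¬ G.Adj v w)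
    ∧ (∀ S : Finset (Fin n),
        errCount (TGkeep n S) (EG G) (labG n) = 0 ↔
          ∀ v ∈ S, ∀ w ∈ S, ¬ G.Adj v w) := by
  have hkeep : (∃ S : Finset (Fin n), S.card = k ∧ ∀ v ∈ S, ∀ w ∈ S, ¬ G.Adj v w) →
      ∃ T', RaisedFromPruning (TG n) k T' ∧ errCount T' (EG G) (labG n) = 0 := by
    rintro ⟨S, rfl, hS⟩
    exact ⟨TGkeep n S, raisedFromPruning_TGkeep S, (errCount_TGkeep_eq_zero_iff G S).2 hS⟩
  refine ⟨⟨?_, hkeep⟩, ⟨?_, ?_⟩, errCount_TGkeep_eq_zero_iff G⟩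
  · rintro ⟨T', hT', herr⟩
    exact exists_independent_of_raisedFromPruning G hT' herr
  · rintro ⟨T', m, hkm, hT', herr⟩
    obtain ⟨S, rfl, hS⟩ := exists_independent_of_raisedFromPruning G hT' herr
    obtain ⟨S', hsub, hcard⟩ := Finset.exists_subset_card_eq hkm
    exact ⟨S', hcard, fun v hv w hw => hS v (hsub hv) w (hsub hw)⟩
  · intro h
    obtain ⟨T', hT', herr⟩ := hkeep h
    exact ⟨T', k, le_rfl, hT', herr⟩
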